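/- Suppose the n × d matrix A has rank n, so σ_n(A) > 0. Let w ∈ [0,1]^d with Σ_{i=1}^d w_i = d − k, let 0 < λ < σ_n(A)/√(d−k), and let x* be a global minimizer over ℝ^d of the convex function F(x) = ‖Ax − y‖₂ + λ Σ_{i=1}^d w_i |x_i|. Then A x* = y. -/

import Mathlib

open Finset Filter Topology

/-- Euclidean (ℓ₂) norm of a vector in ℝ^m. -/
noncomputable def l2norm {m : ℕ} (v : Fin m → ℝ) : ℝ := Real.sqrt (∑ i, v i ^ 2)

/-- The n-th (smallest) singular value of an n × d matrix A (n ≤ d):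
the infimum of ‖Aᵀu‖₂ over unit vectors u ∈ ℝⁿ. -/
noncomputable def sigmaN {n d : ℕ} (A : Matrix (Fin n) (Fin d) ℝ) : ℝ :=
  sInf {r : ℝ | ∃ u : Fin n → ℝ, l2norm u = 1 ∧ r = l2norm (Matrix.vecMul u A)}

lemma l2norm_nonneg {m : ℕ} (v : Fin m → ℝ) : 0 ≤ l2norm v := Real.sqrt_nonneg _

lemma l2norm_sq {m : ℕ} (v : Fin m → ℝ) : l2norm v ^ 2 = v ⬝ᵥ v := by
  rw [l2norm, Real.sq_sqrt (Finset.sum_nonneg fun i _ => sq_nonneg (v i))]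
  simp [dotProduct, sq]

lemma l2norm_eq_zero {m : ℕ} {v : Fin m → ℝ} : l2norm v = 0 ↔ v = 0 := by
  rw [← sq_eq_zero_iff, l2norm_sq, dotProduct_self_eq_zero]

lemma l2norm_smul {m : ℕ} {a : ℝ} (ha : 0 ≤ a) (v : Fin m → ℝ) :
    l2norm (a • v) = a * l2norm v := by
  rw [← sq_eq_sq₀ (l2norm_nonneg _) (mul_nonneg ha (l2norm_nonneg _)), mul_pow, l2norm_sq,
    l2norm_sq, smul_dotProduct, dotProduct_smul, smul_eq_mul, smul_eq_mul]
  ring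

/-- The smallest singular value bounds `‖Aᵀ r‖₂` from below. -/
lemma sigmaN_mul_l2norm_le {n d : ℕ} (A : Matrix (Fin n) (Fin d) ℝ) (r : Fin n → ℝ) :
    sigmaN A * l2norm r ≤ l2norm (Matrix.vecMul r A) := by
  rcases (l2norm_nonneg r).eq_or_lt with h | h
  · rw [← h, mul_zero]
    exact l2norm_nonneg _
  have hinv : 0 ≤ (l2norm r)⁻¹ := inv_nonneg.2 h.le
  have hle : sigmaN A ≤ l2norm (Matrix.vecMul ((l2norm r)⁻¹ • r) A) := by
    refine csInf_le ⟨0, ?_⟩ ⟨_, ?_, rfl⟩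
    · rintro _ ⟨u, -, rfl⟩
      exact l2norm_nonneg _
    · rw [l2norm_smul hinv, inv_mul_cancel₀ h.ne']
  rw [Matrix.smul_vecMul, l2norm_smul hinv, ← div_eq_inv_mul, le_div_iff₀ h] at hle
  exact hle

/-- For weights in `[0, 1]`, the weighted `ℓ₁` norm is at most `√(∑ wᵢ)` times the `ℓ₂` norm. -/
lemma sum_mul_abs_le_sqrt_mul_l2norm {m : ℕ} (w g : Fin m → ℝ)
    (hw : ∀ i, w i ∈ Set.Icc (0 : ℝ) 1) :
    ∑ i, w i * |g i| ≤ √(∑ i, w i) * l2norm g := by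
  refine (Real.sum_mul_le_sqrt_mul_sqrt _ w fun i => |g i|).trans ?_
  simp only [sq_abs]
  refine mul_le_mul_of_nonneg_right (Real.sqrt_le_sqrt ?_) (l2norm_nonneg g)
  refine Finset.sum_le_sum fun i _ => ?_
  nlinarith [(hw i).1, (hw i).2]

/-- Second-order upper bound for the Euclidean norm along a line. -/
lemma l2norm_mul_l2norm_sub_smul_le {m : ℕ} (r h : Fin m → ℝ) (t : ℝ) :
    l2norm r * l2norm (r - t • h) ≤
      l2norm r ^ 2 - t * (r ⬝ᵥ h) + t ^ 2 * l2norm h ^ 2 / 2 := by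
  have hsq : l2norm (r - t • h) ^ 2 =
      l2norm r ^ 2 - 2 * t * (r ⬝ᵥ h) + t ^ 2 * l2norm h ^ 2 := by
    simp only [l2norm_sq, sub_dotProduct, dotProduct_sub, smul_dotProduct, dotProduct_smul,
      smul_eq_mul, dotProduct_comm h r]
    ring
  nlinarith [sq_nonneg (l2norm r - l2norm (r - t • h))]

/-- If A has rank n, w ∈ [0,1]^d with Σ wᵢ = d − k, and
0 < λ < σₙ(A)/√(d−k), then every global minimizer x* of
F(x) = ‖Ax − y‖₂ + λ Σᵢ wᵢ |xᵢ| satisfies A x* = y. -/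
theorem stmt14 {n d : ℕ} (k : ℕ) (hk : 0 < k) (hkd : k < d) (hnd : n ≤ d)
    (A : Matrix (Fin n) (Fin d) ℝ) (hrank : A.rank = n) (y : Fin n → ℝ)
    (w : Fin d → ℝ) (hw : ∀ i, w i ∈ Set.Icc (0 : ℝ) 1)
    (hwsum : ∑ i, w i = (d : ℝ) - (k : ℝ))
    (lam : ℝ) (hlam0 : 0 < lam) (hlam : lam < sigmaN A / Real.sqrt ((d : ℝ) - (k : ℝ)))
    (xstar : Fin d → ℝ)
    (hmin : ∀ x : Fin d → ℝ,
      l2norm (A.mulVec xstar - y) + lam * ∑ i, w i * |xstar i| ≤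
      l2norm (A.mulVec x - y) + lam * ∑ i, w i * |x i|) :
    A.mulVec xstar = y := by
  by_contra hne
  set r := A.mulVec xstar - y with hr
  set g := Matrix.vecMul r A with hg
  set s := √((d : ℝ) - (k : ℝ)) with hs
  have hspos : 0 < s := Real.sqrt_pos.2 (sub_pos.2 (by exact_mod_cast hkd))
  have hRpos : 0 < l2norm r :=
    (l2norm_nonneg r).lt_of_ne' fun h => hne (sub_eq_zero.1 (l2norm_eq_zero.1 h))
  have hgap : lam * s * l2norm r < l2norm g :=
    (mul_lt_mul_of_pos_right ((lt_div_iff₀ hspos).1 hlam) hRpos).trans_le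
      (sigmaN_mul_l2norm_le A r)
  have hGpos : 0 < l2norm g := lt_of_le_of_lt (by positivity) hgap
  have hdot : r ⬝ᵥ A.mulVec g = l2norm g ^ 2 := by
    rw [Matrix.dotProduct_mulVec, l2norm_sq]
  -- Minimality along the descent direction `-Aᵀ r`.
  have key : ∀ t : ℝ, 0 < t →
      l2norm g * (l2norm g - lam * s * l2norm r) ≤ t * l2norm (A.mulVec g) ^ 2 / 2 := by
    intro t ht
    have hres : A.mulVec (xstar - t • g) - y = r - t • A.mulVec g := by
      rw [Matrix.mulVec_sub, Matrix.mulVec_smul, hr]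
      abel
    have hpen : ∑ i, w i * |(xstar - t • g) i| ≤
        ∑ i, w i * |xstar i| + t * (s * l2norm g) := by
      have hsum := sum_mul_abs_le_sqrt_mul_l2norm w g hw
      rw [hwsum] at hsum
      refine le_trans ?_ (add_le_add_right (mul_le_mul_of_nonneg_left hsum ht.le) _)
      rw [Finset.mul_sum, ← Finset.sum_add_distrib]
      refine Finset.sum_le_sum fun i _ => ?_
      have habs := abs_sub (xstar i) (t * g i)
      rw [abs_mul, abs_of_pos ht] at habs
      simp only [Pi.sub_apply, Pi.smul_apply, smul_eq_mul]
      nlinarith [mul_le_mul_of_nonneg_left habs (hw i).1]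
    have hF := hmin (xstar - t • g)
    rw [hres] at hF
    have hdec : l2norm r ≤ l2norm (r - t • A.mulVec g) + lam * (t * (s * l2norm g)) := by
      linarith [mul_le_mul_of_nonneg_left hpen hlam0.le]
    have hquad := l2norm_mul_l2norm_sub_smul_le r (A.mulVec g) t
    rw [hdot] at hquad
    refine le_of_mul_le_mul_left ?_ ht
    linarith [mul_le_mul_of_nonneg_left hdec hRpos.le]
  set D := l2norm g * (l2norm g - lam * s * l2norm r)
  have hD : 0 < D := mul_pos hGpos (sub_pos.2 hgap)
  have hH : 0 < l2norm (A.mulVec g) ^ 2 + 1 := by positivity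
  have h := key (D / (l2norm (A.mulVec g) ^ 2 + 1)) (div_pos hD hH)
  rw [div_mul_eq_mul_div, div_div, le_div_iff₀ (by positivity)] at h
  nlinarith [mul_nonneg hD.le (sq_nonneg (l2norm (A.mulVec g)))]
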